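/- Consider the triangular lattice graph: the simple graph with vertex set ℤ × ℤ in which u and v are adjacent if and only if u − v ∈ {(1,0),(−1,0),(0,1),(0,−1),(1,1),(−1,−1)} (every vertex has degree 6). There exists an edge labelling l with values in {1,2,3}, invariant under translation by (3,0) and by (0,3), such that every vertex has weighted degree in {9, 12, 15} and adjacent vertices have distinct weighted degrees; in particular, the triangular lattice graph has a fully periodic vertex-colouring 3-edge labelling. -/

import Mathlib

/-!
The map `(x, y) ↦ (x + y) mod 3` is a proper 3-colouring of the triangular lattice, and every vertex
has exactly three neighbours in each of the two colour classes other than its own. Label each edge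
by the sum of the colours of its endpoints; since these are distinct elements of `{0, 1, 2}`, the
label is `1`, `2` or `3`. A vertex of colour `i` then has weighted degree
`6 i + 3 (0 + 1 + 2 - i) = 9 + 3 i` (`wdeg_triLabel`), which determines `i`.
-/

open scoped BigOperators

/-- The triangular lattice graph on `ℤ²`. -/
def TriAdj (u v : ℤ × ℤ) : Prop :=
  u - v ∈ ({(1, 0), (-1, 0), (0, 1), (0, -1), (1, 1), (-1, -1)} : Set (ℤ × ℤ))

/-- The weighted degree of a vertex of the triangular lattice graph. -/
noncomputable def wdeg (w : ℤ × ℤ → ℤ × ℤ → ℕ) (u : ℤ × ℤ) : ℕ :=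
  ∑ᶠ v ∈ {v | TriAdj u v}, w u v

/-- The proper 3-colouring `(x + y) mod 3` of the triangular lattice. -/
def triColour (u : ℤ × ℤ) : ℕ := ((u.1 + u.2) % 3).toNat

/-- The label of an edge: the sum of the colours of its endpoints. -/
def triLabel (u v : ℤ × ℤ) : ℕ := triColour u + triColour v

lemma triColour_lt (u : ℤ × ℤ) : triColour u < 3 := by
  unfold triColour; omega

lemma triColour_ne {u v : ℤ × ℤ} (h : TriAdj u v) : triColour u ≠ triColour v := by
  obtain ⟨a, b⟩ := u
  obtain ⟨c, d⟩ := v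
  simp only [TriAdj, Set.mem_insert_iff, Set.mem_singleton_iff, Prod.mk_sub_mk,
    Prod.mk.injEq] at h
  simp only [triColour]
  omega

lemma triAdj_neighbours (a b : ℤ) :
    {v | TriAdj (a, b) v} = ((({(a - 1, b), (a + 1, b), (a, b - 1), (a, b + 1), (a - 1, b - 1),
      (a + 1, b + 1)} : Finset (ℤ × ℤ))) : Set (ℤ × ℤ)) := by
  ext ⟨c, d⟩
  simp only [TriAdj, Set.mem_ofPred_eq, Set.mem_insert_iff, Set.mem_singleton_iff, Prod.mk_sub_mk,
    Prod.mk.injEq, Finset.coe_insert, Finset.coe_singleton]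
  omega

lemma wdeg_triLabel (u : ℤ × ℤ) : wdeg triLabel u = 9 + 3 * triColour u := by
  obtain ⟨a, b⟩ := u
  rw [wdeg, triAdj_neighbours, finsum_mem_coe_finset]
  repeat rw [Finset.sum_insert (by
    simp only [Finset.mem_insert, Finset.mem_singleton, Prod.mk.injEq]; omega)]
  rw [Finset.sum_singleton]
  simp only [triLabel, triColour]
  omega

/-- The triangular lattice graph admits a vertex-colouring `{1,2,3}`-edge labelling, invariant
under translation by `(3,0)` and `(0,3)`, whose weighted degrees all lie in `{9, 12, 15}`. -/
theorem triangular_lattice_123 :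
    ∃ l : ℤ × ℤ → ℤ × ℤ → ℕ,
      (∀ u v, TriAdj u v → l u v ∈ ({1, 2, 3} : Set ℕ)) ∧
      (∀ u v, TriAdj u v → l u v = l v u) ∧
      (∀ u v, TriAdj u v →
        l (u + (3, 0)) (v + (3, 0)) = l u v ∧ l (u + (0, 3)) (v + (0, 3)) = l u v) ∧
      (∀ u : ℤ × ℤ, wdeg l u ∈ ({9, 12, 15} : Set ℕ)) ∧
      (∀ u v, TriAdj u v → wdeg l u ≠ wdeg l v) := by
  refine ⟨triLabel, fun u v h => ?_, fun u v _ => Nat.add_comm _ _, fun u v _ => ?_, fun u => ?_,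
    fun u v h => ?_⟩
  · have := triColour_ne h
    have := triColour_lt u
    have := triColour_lt v
    simp only [triLabel, Set.mem_insert_iff, Set.mem_singleton_iff]
    omega
  · simp only [triLabel, triColour, Prod.fst_add, Prod.snd_add]
    omega
  · have := triColour_lt u
    simp only [wdeg_triLabel, Set.mem_insert_iff, Set.mem_singleton_iff]
    omega
  · have := triColour_ne h
    simp only [wdeg_triLabel]
    omega
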